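/- arXiv:2604.25461 — 3 statements merged into one kernel-verified Lean document; each statement's English description precedes it below -/
import Mathlib

section
/- Let q = p^n be a prime power, r ≥ 2 an integer, and u, v ∈ 𝔽_q^×. For multiplicative characters χ, ψ of 𝔽_q^×, write χ̃ = χ∘N and ψ̃ = ψ∘N where N = N_{𝔽_{q^r}/𝔽_q} is the field norm. Then Σ_{χ,ψ} χ(u^{−1}) ψ(v^{−1}) J_{𝔽_{q^r}}(χ̃,ψ̃) = q^r − 2 + (−1)^{r−1} ( Σ_{χ,ψ} χ(u^{−1}) ψ(v^{−1}) J_{𝔽_q}(χ,ψ)^r − (q−2)^r ), where both sums run over all pairs of multiplicative characters of 𝔽_q^×. -/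
/-!
For a multiplicative function `lam` on `K[X]`, let `S d` be the sum of `lam` over the monic
polynomials of degree `d`, and `A d` the same sum weighted by the von Mangoldt function `Λ`.
Summing the identity `deg f = ∑ Λ g` over monic `g ∣ f` gives `d * S d = ∑ A i * S j` over
`i + j = d`, the logarithmic derivative of the `L`-series `∑ S d * T ^ d`. On the other hand `Λ f`
counts the `x : F` whose characteristic polynomial over `K` is `f`, so `A [F : K]` is the sum over
`x : F` of `lam` at the characteristic polynomial of `x`.

The norms of `-x` and `1 - x` are the values of that polynomial at `0` and `1`. Substituting `-x`
for `x`, the Jacobi sum of `χ ∘ N` and `ψ ∘ N` is therefore `A [F : K]` for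
`lam f = χ (f 0) * ψ (f 1)`. By Lagrange interpolation `(f 0, f 1)` is equidistributed over the
monic `f` of each degree at least `2`. So if `χ` or `ψ` is nontrivial, the `L`-series is
`1 + S 1 * T`, which forces `A r = (-1) ^ (r - 1) * S 1 ^ r`, with `S 1` the Jacobi sum over `K`.
The trivial pair contributes the remaining terms `q ^ r - 2` and `(q - 2) ^ r`.
-/

open Polynomial UniqueFactorizationMonoid
open Finset.HasAntidiagonal (antidiagonal mem_antidiagonal)
open scoped IntermediateField

noncomputable section

section MonicPolynomials

variable (K : Type*) [Field K] [Finite K]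

lemma finite_setOf_monic_natDegree_eq (d : ℕ) :
    {f : K[X] | f.Monic ∧ f.natDegree = d}.Finite :=
  Finite.of_equiv _ ((monicEquivDegreeLT d).trans (degreeLTEquiv K d).toEquiv).symm

/-- The finite set of monic polynomials of degree `d` over a finite field. -/
def monicsOfDegree (d : ℕ) : Finset K[X] :=
  (finite_setOf_monic_natDegree_eq K d).toFinset

variable {K}

lemma mem_monicsOfDegree {d : ℕ} {f : K[X]} :
    f ∈ monicsOfDegree K d ↔ f.Monic ∧ f.natDegree = d := by
  simp [monicsOfDegree]

lemma monicsOfDegree_zero : monicsOfDegree K 0 = {1} := by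
  ext f
  simp only [mem_monicsOfDegree, Finset.mem_singleton]
  exact ⟨fun ⟨hf, hdeg⟩ => hf.natDegree_eq_zero.1 hdeg, fun h => by simp [h]⟩

lemma add_mem_monicsOfDegree {d : ℕ} {f g : K[X]} (hf : f ∈ monicsOfDegree K d)
    (hg : g.degree < d) : f + g ∈ monicsOfDegree K d := by
  obtain ⟨hmonic, rfl⟩ := mem_monicsOfDegree.1 hf
  rw [← degree_eq_natDegree hmonic.ne_zero] at hg
  exact mem_monicsOfDegree.2 ⟨hmonic.add_of_left hg, natDegree_add_eq_left_of_degree_lt hg⟩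

lemma sum_monicsOfDegree_one {K R : Type*} [Field K] [Fintype K] [AddCommMonoid R]
    (φ : K[X] → R) :
    ∑ f ∈ monicsOfDegree K 1, φ f = ∑ a : K, φ (X - C a) := by
  symm
  refine Finset.sum_bij (fun a _ => X - C a) ?_ ?_ ?_ ?_
  · simp [mem_monicsOfDegree, monic_X_sub_C]
  · simp
  · intro f hf
    obtain ⟨hmonic, hdeg⟩ := mem_monicsOfDegree.1 hf
    exact ⟨-f.coeff 0, Finset.mem_univ _, by rw [hmonic.eq_X_add_C hdeg]; simp⟩
  · simp

end MonicPolynomials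

section VonMangoldt

variable {K : Type*} [Field K]

open scoped Classical in
/-- The von Mangoldt function of `K[X]`: `deg P` at a power `P ^ k` with `P` irreducible and
`0 < k`, and `0` at every other polynomial. The radical of `P ^ k` is the monic associate of `P`. -/
def polyVonMangoldt (f : K[X]) : ℕ :=
  if IsPrimePow f then (radical f).natDegree else 0

lemma polyVonMangoldt_pow {P : K[X]} (hP : Irreducible P) {k : ℕ} (hk : k ≠ 0) :
    polyVonMangoldt (P ^ k) = P.natDegree := by
  classical
  rw [polyVonMangoldt, if_pos (hP.prime.isPrimePow.pow hk), radical_pow_of_prime hP.prime hk]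
  exact natDegree_eq_of_degree_eq degree_normalize

lemma polyVonMangoldt_eq_zero {f : K[X]} (hf : ¬ IsPrimePow f) : polyVonMangoldt f = 0 :=
  if_neg hf

open scoped Classical in
/-- The finite set of monic divisors of `f`, obtained by multiplying out the sub-multisets of its
normalized factors. At `f = 0` this is the junk value `{1}`. -/
def monicDivisors (f : K[X]) : Finset K[X] :=
  ((normalizedFactors f).powerset.map Multiset.prod).toFinset

lemma mem_monicDivisors {f g : K[X]} (hf : f ≠ 0) : g ∈ monicDivisors f ↔ g.Monic ∧ g ∣ f := by
  classical
  simp only [monicDivisors, Multiset.mem_toFinset, Multiset.mem_map, Multiset.mem_powerset]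
  constructor
  · rintro ⟨s, hs, rfl⟩
    refine ⟨?_, (Multiset.prod_dvd_prod_of_le hs).trans (prod_normalizedFactors hf).dvd⟩
    simpa using monic_multiset_prod_of_monic s id fun P hP =>
      ((Polynomial.mem_normalizedFactors_iff hf).1 (Multiset.mem_of_le hs hP)).2.1
  · rintro ⟨hg, hgf⟩
    refine ⟨normalizedFactors g,
      (dvd_iff_normalizedFactors_le_normalizedFactors hg.ne_zero hf).1 hgf, ?_⟩
    rw [prod_normalizedFactors_eq hg.ne_zero, hg.normalize_eq_self]

lemma exists_monic_irreducible_pow_eq {f : K[X]} (hf : f.Monic) (hpow : IsPrimePow f) :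
    ∃ P : K[X], P.Monic ∧ Irreducible P ∧ ∃ k ≠ 0, P ^ k = f := by
  classical
  obtain ⟨P, k, hP, hk, rfl⟩ := hpow
  have hmonic := monic_normalize hP.ne_zero
  exact ⟨normalize P, hmonic, (associated_normalize P).irreducible hP.irreducible, k, hk.ne',
    eq_of_monic_of_associated (hmonic.pow k) hf (normalize_associated P).pow_pow⟩

lemma eq_of_monic_irreducible_dvd_pow {P Q : K[X]} (hP : P.Monic) (hQ : Q.Monic)
    (hPirr : Irreducible P) (hQirr : Irreducible Q) {k : ℕ} (hdvd : P ∣ Q ^ k) : P = Q :=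
  eq_of_monic_of_associated hP hQ
    (hPirr.associated_of_dvd hQirr (hPirr.prime.dvd_of_dvd_pow hdvd))

lemma eq_and_eq_of_monic_irreducible_pow_eq {P Q : K[X]} (hP : P.Monic) (hQ : Q.Monic)
    (hPirr : Irreducible P) (hQirr : Irreducible Q) {k l : ℕ} (hk : k ≠ 0) (heq : P ^ k = Q ^ l) :
    P = Q ∧ k = l := by
  obtain rfl : P = Q :=
    eq_of_monic_irreducible_dvd_pow hP hQ hPirr hQirr (heq ▸ dvd_pow_self P hk)
  have hdeg := congrArg natDegree heq
  rw [natDegree_pow, natDegree_pow] at hdeg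
  exact ⟨rfl, Nat.eq_of_mul_eq_mul_right hPirr.natDegree_pos hdeg⟩

open scoped Classical in
lemma natDegree_eq_sum_count_normalizedFactors {f : K[X]} (hf : f.Monic) :
    f.natDegree =
      ∑ P ∈ (normalizedFactors f).toFinset, (normalizedFactors f).count P * P.natDegree := by
  have hprod : (normalizedFactors f).prod = f := by
    rw [prod_normalizedFactors_eq hf.ne_zero, hf.normalize_eq_self]
  conv_lhs => rw [← hprod]
  rw [natDegree_multiset_prod_of_monic, Finset.sum_multiset_map_count]
  · rfl
  · exact fun P hP => ((Polynomial.mem_normalizedFactors_iff hf.ne_zero).1 hP).2.1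

open scoped Classical in
lemma pow_dvd_iff_le_count_normalizedFactors {f P : K[X]} (hf : f ≠ 0) (hP : P.Monic)
    (hPirr : Irreducible P) (k : ℕ) : P ^ k ∣ f ↔ k ≤ (normalizedFactors f).count P := by
  rw [pow_dvd_iff_le_emultiplicity, emultiplicity_eq_count_normalizedFactors hPirr hf,
    hP.normalize_eq_self, Nat.cast_le]

open scoped Classical in
/-- The pairs `(P, k)` with `P` monic irreducible, `0 < k` and `P ^ k ∣ f`; they parametrise the
prime powers among the monic divisors of `f ≠ 0`. -/
def primePowerDivisors (f : K[X]) : Finset (Σ _ : K[X], ℕ) :=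
  (normalizedFactors f).toFinset.sigma fun P => Finset.Icc 1 ((normalizedFactors f).count P)

lemma mem_primePowerDivisors {f P : K[X]} {k : ℕ} (hf : f ≠ 0) :
    ⟨P, k⟩ ∈ primePowerDivisors f ↔ P.Monic ∧ Irreducible P ∧ k ≠ 0 ∧ P ^ k ∣ f := by
  classical
  rw [primePowerDivisors, Finset.mem_sigma, Multiset.mem_toFinset,
    Polynomial.mem_normalizedFactors_iff hf, Finset.mem_Icc, Nat.one_le_iff_ne_zero]
  constructor
  · rintro ⟨⟨hirr, hmonic, -⟩, hk, hle⟩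
    exact ⟨hmonic, hirr, hk, (pow_dvd_iff_le_count_normalizedFactors hf hmonic hirr k).2 hle⟩
  · rintro ⟨hmonic, hirr, hk, hdvd⟩
    exact ⟨⟨hirr, hmonic, (dvd_pow_self P hk).trans hdvd⟩, hk,
      (pow_dvd_iff_le_count_normalizedFactors hf hmonic hirr k).1 hdvd⟩

lemma sum_primePowerDivisors_natDegree {f : K[X]} (hf : f.Monic) :
    ∑ x ∈ primePowerDivisors f, x.1.natDegree = f.natDegree := by
  rw [natDegree_eq_sum_count_normalizedFactors hf, primePowerDivisors, Finset.sum_sigma]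
  simp

lemma sum_monicDivisors_polyVonMangoldt {f : K[X]} (hf : f.Monic) :
    ∑ g ∈ monicDivisors f, polyVonMangoldt g = f.natDegree := by
  have hf0 := hf.ne_zero
  rw [← sum_primePowerDivisors_natDegree hf]
  symm
  refine Finset.sum_of_injOn (fun x => x.1 ^ x.2) ?_ ?_ ?_ ?_
  · rintro ⟨P, k⟩ hPk ⟨Q, l⟩ hQl heq
    obtain ⟨hP, hPirr, hk, -⟩ := (mem_primePowerDivisors hf0).1 hPk
    obtain ⟨hQ, hQirr, -, -⟩ := (mem_primePowerDivisors hf0).1 hQl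
    obtain ⟨rfl, rfl⟩ := eq_and_eq_of_monic_irreducible_pow_eq hP hQ hPirr hQirr hk heq
    rfl
  · rintro ⟨P, k⟩ hPk
    obtain ⟨hP, -, -, hdvd⟩ := (mem_primePowerDivisors hf0).1 hPk
    exact (mem_monicDivisors hf0).2 ⟨hP.pow k, hdvd⟩
  · intro g hg hnot
    obtain ⟨hmonic, hdvd⟩ := (mem_monicDivisors hf0).1 hg
    refine polyVonMangoldt_eq_zero fun hpow => hnot ?_
    obtain ⟨P, hP, hPirr, k, hk, rfl⟩ := exists_monic_irreducible_pow_eq hmonic hpow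
    exact ⟨⟨P, k⟩, (mem_primePowerDivisors hf0).2 ⟨hP, hPirr, hk, hdvd⟩, rfl⟩
  · rintro ⟨P, k⟩ hPk
    obtain ⟨-, hPirr, hk, -⟩ := (mem_primePowerDivisors hf0).1 hPk
    exact (polyVonMangoldt_pow hPirr hk).symm

end VonMangoldt

section LSeries

variable {K R : Type*} [Field K] [Finite K] [CommRing R]

lemma sum_antidiagonal_monicsOfDegree {M : Type*} [AddCommMonoid M] (φ : K[X] → K[X] → M) (d : ℕ) :
    ∑ ij ∈ antidiagonal d, ∑ g ∈ monicsOfDegree K ij.1, ∑ h ∈ monicsOfDegree K ij.2, φ g h =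
      ∑ f ∈ monicsOfDegree K d, ∑ g ∈ monicDivisors f, φ g (f / g) := by
  simp only [Finset.sum_sigma']
  refine Finset.sum_bij' (fun x _ => ⟨x.2.1 * x.2.2, x.2.1⟩)
    (fun y _ => ⟨(y.2.natDegree, (y.1 / y.2).natDegree), y.2, y.1 / y.2⟩) ?_ ?_ ?_ ?_ ?_
  · rintro ⟨⟨i, j⟩, g, h⟩ hx
    simp only [Finset.mem_sigma, mem_antidiagonal, mem_monicsOfDegree] at hx
    obtain ⟨rfl, ⟨hg, rfl⟩, hh, rfl⟩ := hx
    simp [mem_monicsOfDegree, mem_monicDivisors (hg.mul hh).ne_zero, hg.mul hh,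
      hg.natDegree_mul hh, hg]
  · rintro ⟨f, g⟩ hy
    simp only [Finset.mem_sigma, mem_monicsOfDegree] at hy
    obtain ⟨⟨hf, rfl⟩, hgf⟩ := hy
    obtain ⟨hg, h, rfl⟩ := (mem_monicDivisors hf.ne_zero).1 hgf
    have hh : h.Monic := hg.of_mul_monic_left hf
    simp [mem_monicsOfDegree, hg.ne_zero, hg, hh, hg.natDegree_mul hh]
  · rintro ⟨⟨i, j⟩, g, h⟩ hx
    simp only [Finset.mem_sigma, mem_antidiagonal, mem_monicsOfDegree] at hx
    obtain ⟨rfl, ⟨hg, rfl⟩, -, rfl⟩ := hx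
    simp [hg.ne_zero]
  · rintro ⟨f, g⟩ hy
    simp only [Finset.mem_sigma, mem_monicsOfDegree] at hy
    obtain ⟨⟨hf, rfl⟩, hgf⟩ := hy
    obtain ⟨hg, hdvd⟩ := (mem_monicDivisors hf.ne_zero).1 hgf
    simp [EuclideanDomain.mul_div_cancel' hg.ne_zero hdvd]
  · rintro ⟨⟨i, j⟩, g, h⟩ hx
    simp only [Finset.mem_sigma, mem_monicsOfDegree] at hx
    simp [hx.2.1.1.ne_zero]

/-- The sum of a multiplicative function over the monic polynomials of degree `d`: the coefficient
of `T ^ d` in its `L`-series `∑ f monic, lam f * T ^ deg f`. -/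
def monicSum (lam : K[X] →* R) (d : ℕ) : R :=
  ∑ f ∈ monicsOfDegree K d, lam f

/-- The sum of a multiplicative function over the monic polynomials of degree `d`, weighted by the
von Mangoldt function. -/
def vonMangoldtSum (lam : K[X] →* R) (d : ℕ) : R :=
  ∑ f ∈ monicsOfDegree K d, polyVonMangoldt f * lam f

lemma monicSum_zero (lam : K[X] →* R) : monicSum lam 0 = 1 := by
  simp [monicSum, monicsOfDegree_zero]

lemma vonMangoldtSum_zero (lam : K[X] →* R) : vonMangoldtSum lam 0 = 0 := by
  simp [vonMangoldtSum, monicsOfDegree_zero, polyVonMangoldt_eq_zero not_isPrimePow_one]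

lemma natCast_mul_monicSum (lam : K[X] →* R) (d : ℕ) :
    d * monicSum lam d =
      ∑ ij ∈ antidiagonal d, vonMangoldtSum lam ij.1 * monicSum lam ij.2 := by
  calc d * monicSum lam d
      = ∑ f ∈ monicsOfDegree K d, ∑ g ∈ monicDivisors f,
          polyVonMangoldt g * lam g * lam (f / g) := ?_
    _ = _ := ?_
  · rw [monicSum, Finset.mul_sum]
    refine Finset.sum_congr rfl fun f hf => ?_
    obtain ⟨hmonic, rfl⟩ := mem_monicsOfDegree.1 hf
    rw [← sum_monicDivisors_polyVonMangoldt hmonic, Nat.cast_sum, Finset.sum_mul]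
    refine Finset.sum_congr rfl fun g hg => ?_
    obtain ⟨hg, hgf⟩ := (mem_monicDivisors hmonic.ne_zero).1 hg
    rw [mul_assoc, ← map_mul, EuclideanDomain.mul_div_cancel' hg.ne_zero hgf]
  · rw [← sum_antidiagonal_monicsOfDegree fun g h => (polyVonMangoldt g : R) * lam g * lam h]
    simp only [vonMangoldtSum, monicSum, Finset.sum_mul_sum]

lemma vonMangoldtSum_succ_of_monicSum_eq_zero (lam : K[X] →* R)
    (hzero : ∀ d, 2 ≤ d → monicSum lam d = 0) (d : ℕ) :
    vonMangoldtSum lam (d + 1) = (-1) ^ d * monicSum lam 1 ^ (d + 1) := by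
  induction d with
  | zero =>
    simpa [Finset.Nat.antidiagonal_succ, monicSum_zero, vonMangoldtSum_zero]
      using (natCast_mul_monicSum lam 1).symm
  | succ d ih =>
    have hnewton := natCast_mul_monicSum lam (d + 2)
    rw [hzero _ (by lia), mul_zero, Finset.Nat.sum_antidiagonal_succ',
      Finset.Nat.sum_antidiagonal_succ', Finset.sum_eq_zero fun ij _ => by
        rw [hzero _ (by lia), mul_zero], monicSum_zero, ih] at hnewton
    linear_combination -hnewton

end LSeries

section FieldExtension

variable {K F : Type*} [Field K] [Field F] [Algebra K F]

variable (K) in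
/-- The field polynomial of `x`, i.e. the characteristic polynomial of multiplication by `x` on `F`,
written as the power of the minimal polynomial that has degree `[F : K]`. -/
def fieldPolynomial (x : F) : K[X] :=
  minpoly K x ^ Module.finrank K⟮x⟯ F

lemma norm_algebraMap_sub_eq_eval_fieldPolynomial [FiniteDimensional K F] (x : F) (a : K) :
    Algebra.norm K (algebraMap K F a - x) = (fieldPolynomial K x).eval a := by
  classical
  have hx := Algebra.IsIntegral.isIntegral (R := K) x
  let pb := IntermediateField.adjoin.powerBasis hx
  have hgen : pb.gen = IntermediateField.AdjoinSimple.gen K x :=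
    IntermediateField.adjoin.powerBasis_gen hx
  have hnorm : Algebra.norm K (algebraMap K K⟮x⟯ a - pb.gen) = (minpoly K x).eval a := by
    rw [Algebra.norm_eq_matrix_det pb.basis, map_sub, AlgHom.commutes,
      ← IntermediateField.minpoly_gen K x, ← hgen, ← charpoly_leftMulMatrix pb,
      Matrix.eval_charpoly]
    rfl
  have hlift : algebraMap K F a - x = algebraMap K⟮x⟯ F (algebraMap K K⟮x⟯ a - pb.gen) := by
    rw [map_sub, hgen, IntermediateField.AdjoinSimple.algebraMap_gen,
      ← IsScalarTower.algebraMap_apply]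
  rw [hlift, ← Algebra.norm_norm (S := K⟮x⟯), Algebra.norm_algebraMap, map_pow, hnorm,
    fieldPolynomial, eval_pow]

lemma monic_fieldPolynomial [Algebra.IsIntegral K F] (x : F) : (fieldPolynomial K x).Monic :=
  (minpoly.monic (Algebra.IsIntegral.isIntegral x)).pow _

lemma natDegree_fieldPolynomial [FiniteDimensional K F] (x : F) :
    (fieldPolynomial K x).natDegree = Module.finrank K F := by
  rw [fieldPolynomial, natDegree_pow,
    ← IntermediateField.adjoin.finrank (Algebra.IsIntegral.isIntegral x), mul_comm,
    Module.finrank_mul_finrank]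

lemma isPrimePow_fieldPolynomial [FiniteDimensional K F] (x : F) :
    IsPrimePow (fieldPolynomial K x) :=
  (minpoly.irreducible (Algebra.IsIntegral.isIntegral x)).prime.isPrimePow.pow
    Module.finrank_pos.ne'

lemma fieldPolynomial_eq_pow_iff [FiniteDimensional K F] {P : K[X]} (hP : P.Monic)
    (hPirr : Irreducible P) {k : ℕ} (hdeg : (P ^ k).natDegree = Module.finrank K F) (x : F) :
    fieldPolynomial K x = P ^ k ↔ minpoly K x = P := by
  have hint : IsIntegral K x := Algebra.IsIntegral.isIntegral x
  constructor
  · intro h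
    exact (eq_and_eq_of_monic_irreducible_pow_eq (minpoly.monic hint) hP
      (minpoly.irreducible hint) hPirr Module.finrank_pos.ne' h).1
  · rintro rfl
    have hx := natDegree_fieldPolynomial (K := K) x
    rw [← hdeg, fieldPolynomial, natDegree_pow, natDegree_pow] at hx
    rw [fieldPolynomial, Nat.eq_of_mul_eq_mul_right hPirr.natDegree_pos hx]

lemma splits_map_of_natDegree_dvd_finrank [Finite F] {P : K[X]} (hP : Irreducible P)
    (hdvd : P.natDegree ∣ Module.finrank K F) : (P.map (algebraMap K F)).Splits := by
  have : Finite K := .of_injective _ (algebraMap K F).injective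
  have hdvd_frob : P ∣ X ^ Nat.card F - X := by
    rw [Module.natCard_eq_pow_finrank (K := K) (V := F)]
    exact hP.natDegree_dvd_iff_dvd_X_pow_card_pow_sub_X.1 hdvd
  have hsplits : (X ^ Nat.card F - X : F[X]).Splits := splits_X_pow_nat_card_sub_X
  refine hsplits.of_dvd (FiniteField.X_pow_card_sub_X_ne_zero F Finite.one_lt_card) ?_
  simpa using Polynomial.map_dvd (algebraMap K F) hdvd_frob

variable [Fintype F]

open scoped Classical in
lemma card_filter_minpoly_eq {P : K[X]} (hP : P.Monic) (hPirr : Irreducible P)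
    (hdvd : P.natDegree ∣ Module.finrank K F) :
    (Finset.univ.filter fun x : F => minpoly K x = P).card = P.natDegree := by
  have : Finite K := .of_injective _ (algebraMap K F).injective
  have hroots : (Finset.univ.filter fun x : F => minpoly K x = P) = (P.rootSet F).toFinset := by
    ext x
    rw [Finset.mem_filter_univ, Set.mem_toFinset, mem_rootSet_of_ne hP.ne_zero]
    exact ⟨fun h => h ▸ minpoly.aeval K x,
      fun h => (minpoly.eq_of_irreducible_of_monic hPirr h hP).symm⟩
  rw [hroots, Set.toFinset_card]
  exact card_rootSet_eq_natDegree (PerfectField.separable_of_irreducible hPirr)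
    (splits_map_of_natDegree_dvd_finrank hPirr hdvd)

open scoped Classical in
lemma card_filter_fieldPolynomial_eq [Finite K] {f : K[X]}
    (hf : f ∈ monicsOfDegree K (Module.finrank K F)) :
    (Finset.univ.filter fun x : F => fieldPolynomial K x = f).card = polyVonMangoldt f := by
  obtain ⟨hmonic, hdeg⟩ := mem_monicsOfDegree.1 hf
  by_cases hpow : IsPrimePow f
  · obtain ⟨P, hP, hPirr, k, hk, rfl⟩ := exists_monic_irreducible_pow_eq hmonic hpow
    have hdvd : P.natDegree ∣ Module.finrank K F :=
      hdeg ▸ natDegree_pow P k ▸ dvd_mul_left _ _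
    simp only [fieldPolynomial_eq_pow_iff hP hPirr hdeg]
    rw [polyVonMangoldt_pow hPirr hk, card_filter_minpoly_eq hP hPirr hdvd]
  · rw [polyVonMangoldt_eq_zero hpow, Finset.card_eq_zero, Finset.filter_eq_empty_iff]
    rintro x - rfl
    exact hpow (isPrimePow_fieldPolynomial x)

lemma sum_apply_fieldPolynomial [Finite K] {R : Type*} [CommRing R] (lam : K[X] →* R) :
    ∑ x : F, lam (fieldPolynomial K x) = vonMangoldtSum lam (Module.finrank K F) := by
  classical
  have hmem (x : F) : fieldPolynomial K x ∈ monicsOfDegree K (Module.finrank K F) :=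
    mem_monicsOfDegree.2 ⟨monic_fieldPolynomial x, natDegree_fieldPolynomial x⟩
  rw [← Finset.sum_fiberwise_of_maps_to' (fun x _ => hmem x) lam, vonMangoldtSum]
  refine Finset.sum_congr rfl fun f hf => ?_
  rw [Finset.sum_const, card_filter_fieldPolynomial_eq hf, nsmul_eq_mul]

end FieldExtension

section CharacterSums

variable {K R ι : Type*} [Field K] [CommRing R] [Fintype ι]

/-- The multiplicative function `f ↦ ∏ i, χ i (f (v i))` on `K[X]`. -/
def evalMulChar (χ : ι → MulChar K R) (v : ι → K) : K[X] →* R :=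
  ∏ i, (χ i).toMonoidHom.comp (evalRingHom (v i) : K[X] →* K)

lemma evalMulChar_apply (χ : ι → MulChar K R) (v : ι → K) (f : K[X]) :
    evalMulChar χ v f = ∏ i, χ i (f.eval (v i)) := by
  simp [evalMulChar, MonoidHom.finsetProd_apply]

open scoped Classical in
lemma card_filter_eval_eq_card_filter_eval_eq_zero [Finite K] {v : ι → K}
    (hv : Function.Injective v) {d : ℕ} (hd : Fintype.card ι ≤ d) (y : ι → K) :
    ((monicsOfDegree K d).filter fun f => (fun i => f.eval (v i)) = y).card =
      ((monicsOfDegree K d).filter fun f => (fun i => f.eval (v i)) = 0).card := by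
  let g := Lagrange.interpolate Finset.univ v y
  have hg (i : ι) : g.eval (v i) = y i :=
    Lagrange.eval_interpolate_at_node y hv.injOn (Finset.mem_univ i)
  have hdeg : g.degree < d :=
    (Lagrange.degree_interpolate_lt y hv.injOn).trans_le (by simpa using hd)
  refine Finset.card_nbij' (· - g) (· + g) ?_ ?_ ?_ ?_
  · intro f hf
    obtain ⟨hmem, heval⟩ := Finset.mem_filter.1 hf
    refine Finset.mem_filter.2 ⟨?_, funext fun i => ?_⟩
    · simpa only [sub_eq_add_neg] using add_mem_monicsOfDegree hmem (by rwa [degree_neg])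
    · simp [hg, ← heval]
  · intro f hf
    obtain ⟨hmem, heval⟩ := Finset.mem_filter.1 hf
    refine Finset.mem_filter.2 ⟨add_mem_monicsOfDegree hmem hdeg, funext fun i => ?_⟩
    simp [hg, congrFun heval i]
  · simp [Set.LeftInvOn]
  · simp [Set.RightInvOn, Set.LeftInvOn]

open scoped Classical in
lemma sum_monicsOfDegree_eval [Fintype K] {v : ι → K} (hv : Function.Injective v) {d : ℕ}
    (hd : Fintype.card ι ≤ d) (φ : (ι → K) → R) :
    ∑ f ∈ monicsOfDegree K d, φ (fun i => f.eval (v i)) =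
      ((monicsOfDegree K d).filter fun f => (fun i => f.eval (v i)) = 0).card * ∑ y, φ y := by
  rw [← Finset.sum_fiberwise' _ (fun (f : K[X]) i => f.eval (v i)) φ, Finset.mul_sum]
  refine Finset.sum_congr rfl fun y _ => ?_
  rw [Finset.sum_const, card_filter_eval_eq_card_filter_eval_eq_zero hv hd, nsmul_eq_mul]

lemma monicSum_evalMulChar_eq_zero [Finite K] [IsDomain R] {χ : ι → MulChar K R} {v : ι → K}
    (hv : Function.Injective v) (hχ : ∃ i, χ i ≠ 1) {d : ℕ} (hd : Fintype.card ι ≤ d) :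
    monicSum (evalMulChar χ v) d = 0 := by
  classical
  cases nonempty_fintype K
  obtain ⟨i, hi⟩ := hχ
  have hprod : ∑ y : ι → K, ∏ i, χ i (y i) = 0 := by
    rw [← Fintype.prod_sum]
    exact Finset.prod_eq_zero (Finset.mem_univ i) (MulChar.sum_eq_zero_of_ne_one hi)
  simp only [monicSum, evalMulChar_apply]
  rw [sum_monicsOfDegree_eval hv hd fun y => ∏ i, χ i (y i), hprod, mul_zero]

lemma monicSum_evalMulChar_one [Fintype K] (χ : ι → MulChar K R) (v : ι → K) :
    monicSum (evalMulChar χ v) 1 = ∑ a, ∏ i, χ i (v i - a) := by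
  simp [monicSum, sum_monicsOfDegree_one, evalMulChar_apply]

theorem sum_prod_mulChar_norm_sub {F : Type*} [Field F] [Fintype F] [Algebra K F] [Fintype K]
    [IsDomain R] {χ : ι → MulChar K R} {v : ι → K} (hv : Function.Injective v)
    (hι : Fintype.card ι ≤ 2) (hχ : ∃ i, χ i ≠ 1) :
    ∑ x : F, ∏ i, χ i (Algebra.norm K (algebraMap K F (v i) - x)) =
      (-1) ^ (Module.finrank K F - 1) * (∑ a, ∏ i, χ i (v i - a)) ^ Module.finrank K F := by
  simp only [norm_algebraMap_sub_eq_eval_fieldPolynomial, ← evalMulChar_apply]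
  rw [sum_apply_fieldPolynomial, ← monicSum_evalMulChar_one]
  obtain ⟨d, hd⟩ := Nat.exists_eq_add_one.2 (Module.finrank_pos (R := K) (M := F))
  rw [hd, Nat.add_sub_cancel]
  exact vonMangoldtSum_succ_of_monicSum_eq_zero _
    (fun _ hd => monicSum_evalMulChar_eq_zero hv hχ (hι.trans hd)) d

end CharacterSums

section JacobiSums

variable {K F R : Type*} [Field K] [Field F] [Fintype F] [Algebra K F] [CommRing R]

variable (F) in
/-- The Jacobi sum `J_F(χ ∘ N, ψ ∘ N)` with `N` the norm of `F` over `K`, in the normalisation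
`J_F(χ, ψ) = ∑ x, χ x * ψ (x + 1)`. -/
def normJacobiSum (χ ψ : MulChar K R) : R :=
  ∑ x : F, χ (Algebra.norm K x) * ψ (Algebra.norm K (x + 1))

lemma normJacobiSum_eq_sum_norm_sub (χ ψ : MulChar K R) :
    normJacobiSum F χ ψ = ∑ x : F, ∏ i, (![χ, ψ] : Fin 2 → MulChar K R) i
      (Algebra.norm K (algebraMap K F ((![0, 1] : Fin 2 → K) i) - x)) := by
  rw [normJacobiSum, ← Equiv.sum_comp (Equiv.neg F)]
  simp [Fin.prod_univ_two, neg_add_eq_sub]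

lemma normJacobiSum_eq_pow [Fintype K] [IsDomain R] {χ ψ : MulChar K R} (h : χ ≠ 1 ∨ ψ ≠ 1) :
    normJacobiSum F χ ψ =
      (-1) ^ (Module.finrank K F - 1) * normJacobiSum K χ ψ ^ Module.finrank K F := by
  have hnodes : Function.Injective (![0, 1] : Fin 2 → K) := by
    simp [Function.Injective, Fin.forall_fin_two]
  rw [normJacobiSum_eq_sum_norm_sub, normJacobiSum_eq_sum_norm_sub,
    sum_prod_mulChar_norm_sub hnodes (by simp) (by simpa [Fin.exists_fin_two] using h)]
  simp

lemma normJacobiSum_one_one :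
    normJacobiSum F (1 : MulChar K R) 1 = Fintype.card F - 2 := by
  classical
  have hnorm (x : F) : (1 : MulChar K R) (Algebra.norm K x) = (1 : MulChar F R) x := by
    obtain rfl | hx := eq_or_ne x 0
    · rw [Algebra.norm_zero, MulChar.map_zero, MulChar.map_zero]
    · rw [MulChar.one_apply (Algebra.norm_ne_zero_iff.2 hx).isUnit, MulChar.one_apply hx.isUnit]
  have hneg (x : F) : (1 : MulChar F R) (-x) = (1 : MulChar F R) x := by
    rw [neg_eq_neg_one_mul, map_mul, MulChar.one_apply isUnit_one.neg, one_mul]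
  rw [← jacobiSum_one_one, normJacobiSum, jacobiSum, ← Equiv.sum_comp (Equiv.neg F)]
  refine Finset.sum_congr rfl fun x _ => ?_
  rw [hnorm, hnorm, Equiv.neg_apply, hneg, neg_add_eq_sub]

end JacobiSums

theorem weighted_jacobiSum_norm_comparison_general {K F R : Type*} [Field K] [Field F] [Fintype K]
    [Fintype F] [Algebra K F] [CommRing R] [IsDomain R] [Fintype (MulChar K R)]
    (w : MulChar K R → MulChar K R → R) :
    ∑ χ, ∑ ψ, w χ ψ * normJacobiSum F χ ψ =
      w 1 1 * (Fintype.card F - 2) + (-1) ^ (Module.finrank K F - 1) *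
        (∑ χ, ∑ ψ, w χ ψ * normJacobiSum K χ ψ ^ Module.finrank K F -
          w 1 1 * (Fintype.card K - 2) ^ Module.finrank K F) := by
  have hsum : ∑ χ, ∑ ψ, w χ ψ * (normJacobiSum F χ ψ -
        (-1) ^ (Module.finrank K F - 1) * normJacobiSum K χ ψ ^ Module.finrank K F) =
      w 1 1 * (Fintype.card F - 2 -
        (-1) ^ (Module.finrank K F - 1) * (Fintype.card K - 2) ^ Module.finrank K F) := by
    rw [Fintype.sum_eq_single 1, Fintype.sum_eq_single 1, normJacobiSum_one_one,
      normJacobiSum_one_one]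
    · intro ψ hψ
      rw [normJacobiSum_eq_pow (.inr hψ), sub_self, mul_zero]
    · intro χ hχ
      refine Finset.sum_eq_zero fun ψ _ => ?_
      rw [normJacobiSum_eq_pow (.inl hχ), sub_self, mul_zero]
  simp only [mul_sub, mul_left_comm (w _ _), Finset.sum_sub_distrib, ← Finset.mul_sum] at hsum
  linear_combination hsum

end

/-- Weighted comparison of Jacobi sums: for `u, v ∈ 𝔽_q^×`,
`∑_{χ,ψ} χ(u⁻¹) ψ(v⁻¹) J_{𝔽_{q^r}}(χ∘N, ψ∘N)
  = q^r - 2 + (-1)^{r-1} (∑_{χ,ψ} χ(u⁻¹) ψ(v⁻¹) J_{𝔽_q}(χ,ψ)^r - (q-2)^r)`,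
where `J_F(χ,ψ) = ∑_{x ∈ F} χ(x) ψ(x+1)` and `N` is the field norm. -/
theorem weighted_jacobiSum_norm_comparison {p n q r : ℕ} (hp : p.Prime) (hn : 1 ≤ n)
    (hq : q = p ^ n) (hr : 2 ≤ r)
    {K F : Type*} [Field K] [Field F] [Fintype K] [Fintype F] [Algebra K F]
    (hK : Fintype.card K = q) (hF : Fintype.card F = q ^ r)
    (u v : Kˣ) [Fintype (MulChar K ℂ)] :
    (∑ χ : MulChar K ℂ, ∑ ψ : MulChar K ℂ,
        χ ((u : K)⁻¹) * ψ ((v : K)⁻¹) *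
          ∑ x : F, χ (Algebra.norm K x) * ψ (Algebra.norm K (x + 1))) =
      (q : ℂ) ^ r - 2 + (-1 : ℂ) ^ (r - 1) *
        ((∑ χ : MulChar K ℂ, ∑ ψ : MulChar K ℂ,
            χ ((u : K)⁻¹) * ψ ((v : K)⁻¹) * (∑ x : K, χ x * ψ (x + 1)) ^ r) -
          ((q : ℂ) - 2) ^ r) := by
  obtain rfl : r = Module.finrank K F := Nat.pow_right_injective (hK ▸ Fintype.one_lt_card)
    (hF.symm.trans (hK ▸ Module.card_eq_pow_finrank))
  simpa [normJacobiSum, hK, hF, MulChar.one_apply] using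
    weighted_jacobiSum_norm_comparison_general (F := F) fun χ ψ : MulChar K ℂ =>
      χ (u : K)⁻¹ * ψ (v : K)⁻¹
end

section
/- Let q = p^n be a prime power with q ≥ 4, let r ≥ 3 be an integer, and let k = (q^r − 1)/(q − 1). Then for every 0 ≤ a,b ≤ q−2, the cyclotomic number satisfies the strict inequality (a,b)_{q−1} < ⌈k/2⌉. -/
/-- `x` lies in the cyclotomic coset `C_a = ω^a ⟨ω^e⟩` of `Fˣ`. -/
def InCycCoset {F : Type*} [Field F] (ω : Fˣ) (e a : ℕ) (x : Fˣ) : Prop :=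
  ∃ m : ℕ, x = ω ^ a * (ω ^ e) ^ m

/-- The cyclotomic number `(a,b)_e` : the number of `x ∈ C_a` with `x + 1 ∈ C_b`. -/
noncomputable def cycNum {F : Type*} [Field F] (ω : Fˣ) (e a b : ℕ) : ℕ :=
  Nat.card {x : Fˣ | InCycCoset ω e a x ∧ ∃ y : Fˣ, InCycCoset ω e b y ∧ (y : F) = (x : F) + 1}

/-!
If `x` lies in `C_a` and `x + 1` in `C_b`, then `x ^ k = A` and `(x + 1) ^ k = B`, where
`A = ω ^ (a * k)` and `B = ω ^ (b * k)`. Write `k = m + q ^ (r - 1)` with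
`m = 1 + q + ⋯ + q ^ (r - 2)`. Since `x ↦ x ^ q ^ (r - 1)` is additive, multiplying the second
equation by `x ^ m` and substituting the first gives `(x + 1) ^ m * (x ^ m + A) = B * x ^ m`,
which has at most `2 * m` solutions. As `k = q * m + 1` and `4 ≤ q`, we have `2 * m < ⌈k / 2⌉`.
-/

section ShiftedPower

open Polynomial

variable {R : Type*} [CommRing R] {m : ℕ}

/-- The polynomial `(X + 1) ^ m * (X ^ m + A) - B * X ^ m`. In exponential characteristic `p` it
vanishes at every solution of the system `x ^ (m + p ^ j) = A`, `(x + 1) ^ (m + p ^ j) = B`, for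
every `j`. -/
noncomputable def shiftedPowerPoly (m : ℕ) (A B : R) : R[X] :=
  (X + C 1) ^ m * (X ^ m + C A) - C B * X ^ m

theorem isRoot_shiftedPowerPoly (p : ℕ) [ExpChar R p] {j : ℕ} {A B x : R}
    (hA : x ^ (m + p ^ j) = A) (hB : (x + 1) ^ (m + p ^ j) = B) :
    (shiftedPowerPoly m A B).IsRoot x := by
  have frobenius : (x + 1) ^ p ^ j = x ^ p ^ j + 1 := by rw [add_pow_expChar_pow, one_pow]
  rw [pow_add] at hA hB
  rw [frobenius] at hB
  simp only [shiftedPowerPoly, IsRoot.def, eval_sub, eval_mul, eval_pow, eval_add, eval_X, eval_C,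
    ← hA, ← hB]
  ring

variable [IsDomain R]

theorem natDegree_shiftedPowerPoly (hm : m ≠ 0) (A B : R) :
    (shiftedPowerPoly m A B).natDegree = 2 * m := by
  have leading : ((X + C (1 : R)) ^ m * (X ^ m + C A)).natDegree = 2 * m := by
    rw [((monic_X_add_C 1).pow m).natDegree_mul (monic_X_pow_add_C A hm), natDegree_pow,
      natDegree_X_add_C, natDegree_X_pow_add_C, mul_one, two_mul]
  have lower : (C B * X ^ m).natDegree ≤ m := natDegree_C_mul_X_pow_le B m
  rw [shiftedPowerPoly, natDegree_sub_eq_left_of_natDegree_lt (by lia), leading]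

theorem shiftedPowerPoly_ne_zero (hm : m ≠ 0) (A B : R) : shiftedPowerPoly m A B ≠ 0 :=
  ne_zero_of_natDegree_gt (n := 0) (by rw [natDegree_shiftedPowerPoly hm]; lia)

theorem encard_pow_eq_and_add_one_pow_eq_le (p : ℕ) [ExpChar R p] (hm : m ≠ 0) (j : ℕ)
    (A B : R) :
    {x : R | x ^ (m + p ^ j) = A ∧ (x + 1) ^ (m + p ^ j) = B}.encard ≤ (2 * m : ℕ) := by
  classical
  calc {x : R | x ^ (m + p ^ j) = A ∧ (x + 1) ^ (m + p ^ j) = B}.encard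
    _ ≤ ((shiftedPowerPoly m A B).roots.toFinset : Set R).encard := by
      refine Set.encard_le_encard fun x ⟨hA, hB⟩ ↦ ?_
      rw [Finset.mem_coe, Multiset.mem_toFinset, mem_roots (shiftedPowerPoly_ne_zero hm A B)]
      exact isRoot_shiftedPowerPoly p hA hB
    _ ≤ (2 * m : ℕ) := by
      rw [Set.encard_coe_eq_coe_finsetCard, Nat.cast_le, ← natDegree_shiftedPowerPoly hm A B]
      exact (Multiset.toFinset_card_le _).trans (card_roots' _)

end ShiftedPower

section CyclotomicNumber

variable {F : Type*} [Field F] {ω : Fˣ} {e k : ℕ}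

theorem InCycCoset.pow_eq (hω : ω ^ (e * k) = 1) {c : ℕ} {x : Fˣ} (hx : InCycCoset ω e c x) :
    x ^ k = ω ^ (c * k) := by
  obtain ⟨j, rfl⟩ := hx
  rw [mul_pow, pow_right_comm (ω ^ e), ← pow_mul ω e k, hω, one_pow, mul_one, ← pow_mul]

theorem cycNum_le_encard (hω : ω ^ (e * k) = 1) (a b : ℕ) :
    (cycNum ω e a b : ℕ∞) ≤
      {x : F | x ^ k = (ω ^ (a * k) : Fˣ) ∧ (x + 1) ^ k = (ω ^ (b * k) : Fˣ)}.encard := by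
  rw [cycNum, Nat.card_coe_set_eq]
  refine (Set.ncard_le_encard _).trans ?_
  rw [← Units.val_injective.encard_image]
  refine Set.encard_le_encard ?_
  rintro _ ⟨x, ⟨hx, y, hy, hyx⟩, rfl⟩
  rw [Set.mem_ofPred_eq, ← hyx, ← hx.pow_eq hω, ← hy.pow_eq hω]
  exact ⟨(Units.val_pow_eq_pow_val x k).symm, (Units.val_pow_eq_pow_val y k).symm⟩

theorem cycNum_le_two_mul (p : ℕ) [ExpChar F p] {m j : ℕ} (hm : m ≠ 0)
    (hω : ω ^ (e * (m + p ^ j)) = 1) (a b : ℕ) : cycNum ω e a b ≤ 2 * m :=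
  Nat.cast_le.mp <| (cycNum_le_encard hω a b).trans <|
    encard_pow_eq_and_add_one_pow_eq_le p hm j _ _

variable [Fintype F] {q s : ℕ}

theorem exists_expChar_and_eq_pow_of_card_eq_pow {r : ℕ} (hr : r ≠ 0)
    (hF : Fintype.card F = q ^ r) : ∃ p n : ℕ, ExpChar F p ∧ q = p ^ n := by
  obtain ⟨p, n, hp, -, rfl⟩ : IsPrimePow q :=
    (isPrimePow_pow_iff hr).mp (hF ▸ FiniteField.isPrimePow_card F)
  have : Fact p.Prime := ⟨hp.nat_prime⟩
  have : CharP F p := charP_of_card_eq_prime_pow (f := n * r) (by rw [hF, pow_mul])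
  exact ⟨p, n, .prime hp.nat_prime, rfl⟩

theorem units_pow_sub_one_mul_geom_sum_eq_one {r : ℕ} (hF : Fintype.card F = q ^ r) (ω : Fˣ) :
    ω ^ ((q - 1) * ∑ i ∈ Finset.range r, q ^ i) = 1 := by
  classical
  have one_lt_q : 1 < q :=
    lt_of_pow_lt_pow_left₀ r q.zero_le (by rw [one_pow, ← hF]; exact Fintype.one_lt_card)
  rw [mul_comm, geom_sum_mul_of_one_le one_lt_q.le, ← hF, ← Fintype.card_units, pow_card_eq_one]

theorem cycNum_le_two_mul_geom_sum (hs : s ≠ 0) (hF : Fintype.card F = q ^ (s + 1)) (ω : Fˣ)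
    (a b : ℕ) : cycNum ω (q - 1) a b ≤ 2 * ∑ i ∈ Finset.range s, q ^ i := by
  obtain ⟨p, n, hp, rfl⟩ := exists_expChar_and_eq_pow_of_card_eq_pow s.succ_ne_zero hF
  have hω := units_pow_sub_one_mul_geom_sum_eq_one hF ω
  rw [Finset.sum_range_succ, ← pow_mul p n s] at hω
  exact cycNum_le_two_mul p (geom_sum_pos (Nat.zero_le _) hs).ne' hω a b

end CyclotomicNumber

theorem two_mul_geom_sum_lt_half_geom_sum_succ {q : ℕ} (hq : 4 ≤ q) (s : ℕ) :
    2 * ∑ i ∈ Finset.range s, q ^ i < (∑ i ∈ Finset.range (s + 1), q ^ i + 1) / 2 := by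
  have := Nat.mul_le_mul_right (∑ i ∈ Finset.range s, q ^ i) hq
  rw [geom_sum_succ]
  lia

theorem cycNum_lt_ceil_half_k_general {F : Type*} [Field F] [Fintype F] {q r : ℕ} (hq : 4 ≤ q)
    (hr : 2 ≤ r) (hF : Fintype.card F = q ^ r) (ω : Fˣ) (a b : ℕ) :
    cycNum ω (q - 1) a b < ((q ^ r - 1) / (q - 1) + 1) / 2 := by
  obtain ⟨s, rfl⟩ := Nat.exists_eq_add_of_le' (Nat.one_le_of_lt hr)
  calc cycNum ω (q - 1) a b
    _ ≤ 2 * ∑ i ∈ Finset.range s, q ^ i := cycNum_le_two_mul_geom_sum (by lia) hF ω a b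
    _ < (∑ i ∈ Finset.range (s + 1), q ^ i + 1) / 2 := two_mul_geom_sum_lt_half_geom_sum_succ hq s
    _ = ((q ^ (s + 1) - 1) / (q - 1) + 1) / 2 := by rw [Nat.geomSum_eq (by lia)]

/-- If `q = p^n ≥ 4` is a prime power, `r ≥ 3`, and `k = (q^r - 1)/(q - 1)`, then every
cyclotomic number `(a,b)_{q-1}` over `𝔽_{q^r}` is strictly less than `⌈k/2⌉`. -/
theorem cycNum_lt_ceil_half_k {p n q r k : ℕ} (hp : p.Prime) (hn : 1 ≤ n) (hq : q = p ^ n)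
    (hq4 : 4 ≤ q) (hr : 3 ≤ r) (hk : k = (q ^ r - 1) / (q - 1))
    {F : Type*} [Field F] [Fintype F] (hF : Fintype.card F = q ^ r)
    (ω : Fˣ) (hω : ∀ x : Fˣ, x ∈ Subgroup.zpowers ω)
    (a b : ℕ) (ha : a ≤ q - 2) (hb : b ≤ q - 2) :
    cycNum ω (q - 1) a b < (k + 1) / 2 :=
  hk ▸ cycNum_lt_ceil_half_k_general hq4 (Nat.le_of_succ_le hr) hF ω a b
end

section
/- Let q = p^n be a power of an odd prime p, take r = 2, k = q + 1, and 0 ≤ a,b ≤ q−2. Put Δ(a,b) = (1 + ω^{ak} − ω^{bk})^2 − 4ω^{ak} ∈ 𝔽_q. Then (a,b)_{q−1} = 1 if Δ(a,b) = 0; (a,b)_{q−1} = 0 if Δ(a,b) ≠ 0 and Δ(a,b) is a square in 𝔽_q; and (a,b)_{q−1} = 2 if Δ(a,b) is a nonsquare in 𝔽_q. -/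
/-!
For an extension `F / K` of finite fields with `|K| = q`, the coset `C_a = ω^a ⟨ω^(q-1)⟩` is a
fibre of the norm `N : Fˣ → Kˣ`, so `(a,b)_{q-1}` counts the `x` with `N x = N ω ^ a` and
`N (x + 1) = N ω ^ b`. In degree two `N (x + 1) = N x + tr x + 1`, so this prescribes the trace `t`
and the norm `m` of `x`. Such an `x` satisfies `x² - t x + m = 0`, with discriminant
`Δ = t² - 4m`. If `Δ` is a square in `K` then the roots lie in `K`, where an element has trace `t`
and norm `m` only when it is a double root. If `Δ` is not a square in `K` then it becomes one in
`F`, and both roots have minimal polynomial `X² - t X + m`, hence trace `t` and norm `m`.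
-/

section CyclotomicCoset

theorem inCycCoset_iff_pow_eq {F : Type*} [Field F] [Finite F] {ω : Fˣ}
    (hω : ∀ x : Fˣ, x ∈ Subgroup.zpowers ω) {e k : ℕ} (hord : orderOf ω = e * k) (a : ℕ) (x : Fˣ) :
    InCycCoset ω e a x ↔ x ^ k = (ω ^ k) ^ a := by
  have hk : 0 < k := Nat.pos_of_mul_pos_left (hord ▸ orderOf_pos ω)
  constructor
  · rintro ⟨m, rfl⟩
    have hone : (ω ^ e) ^ k = 1 := by rw [← pow_mul, ← hord, pow_orderOf_eq_one]
    rw [mul_pow, pow_right_comm (ω ^ e), hone, one_pow, mul_one, pow_right_comm]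
  · intro hx
    obtain ⟨j, hj⟩ : ∃ j : ℕ, ω ^ j = (ω ^ a)⁻¹ * x :=
      mem_powers_iff_mem_zpowers.mpr (hω ((ω ^ a)⁻¹ * x))
    have hjk : ω ^ (j * k) = 1 := by
      rw [pow_mul, hj, mul_pow, hx, inv_pow, pow_right_comm, inv_mul_cancel]
    obtain ⟨m, rfl⟩ : e ∣ j :=
      Nat.dvd_of_mul_dvd_mul_right hk (hord ▸ orderOf_dvd_of_pow_eq_one hjk)
    exact ⟨m, by rw [← pow_mul, hj, mul_inv_cancel_left]⟩

variable {K F : Type*} [Field K] [Field F] [Finite F] [Algebra K F] {ω : Fˣ}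

theorem inCycCoset_iff_norm_eq (hω : ∀ x : Fˣ, x ∈ Subgroup.zpowers ω) (a : ℕ) (x : Fˣ) :
    InCycCoset ω (Nat.card K - 1) a x ↔ Algebra.norm K (x : F) = Algebra.norm K (ω : F) ^ a := by
  have hdvd : Nat.card K - 1 ∣ Nat.card F - 1 := by
    rw [Module.natCard_eq_pow_finrank (K := K) (V := F)]
    exact Nat.sub_one_dvd_pow_sub_one _ _
  have hord : orderOf ω = (Nat.card K - 1) * ((Nat.card F - 1) / (Nat.card K - 1)) := by
    rw [Nat.mul_div_cancel' hdvd, orderOf_eq_card_of_forall_mem_zpowers hω, Nat.card_units]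
  rw [inCycCoset_iff_pow_eq hω hord, ← (algebraMap K F).injective.eq_iff, map_pow,
    FiniteField.algebraMap_norm_eq_pow, FiniteField.algebraMap_norm_eq_pow]
  exact Units.ext_iff

theorem cycNum_eq_ncard_norm_eq (hω : ∀ x : Fˣ, x ∈ Subgroup.zpowers ω) (a b : ℕ) :
    cycNum ω (Nat.card K - 1) a b =
      {x : F | Algebra.norm K x = Algebra.norm K (ω : F) ^ a ∧
        Algebra.norm K (x + 1) = Algebra.norm K (ω : F) ^ b}.ncard := by
  have ne_zero_of_norm_eq {z : F} {c : ℕ}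
      (hz : Algebra.norm K z = Algebra.norm K (ω : F) ^ c) : z ≠ 0 :=
    Algebra.norm_ne_zero_iff.mp
      (hz ▸ pow_ne_zero c (Algebra.norm_ne_zero_iff.mpr ω.ne_zero))
  rw [cycNum, Nat.card_coe_set_eq, ← Set.ncard_image_of_injective _ (Units.val_injective (α := F))]
  congr 1
  ext z
  simp only [Set.mem_image, Set.mem_ofPred_eq, inCycCoset_iff_norm_eq (K := K) hω]
  constructor
  · rintro ⟨x, ⟨hx, y, hy, hyx⟩, rfl⟩
    exact ⟨hx, hyx ▸ hy⟩
  · rintro ⟨hz, hz'⟩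
    exact ⟨Units.mk0 z (ne_zero_of_norm_eq hz),
      ⟨hz, Units.mk0 (z + 1) (ne_zero_of_norm_eq hz'), hz', rfl⟩, rfl⟩

end CyclotomicCoset

section QuadraticAlgebra

variable {R S : Type*} [CommRing R] [Nontrivial R] [CommRing S] [Algebra R S]
  [Algebra.IsQuadraticExtension R S]

theorem norm_add_algebraMap_of_isQuadraticExtension (x : S) (c : R) :
    Algebra.norm R (x + algebraMap R S c) =
      Algebra.norm R x + Algebra.trace R S x * c + c ^ 2 := by
  let basis := Module.finBasisOfFinrankEq R S (Algebra.IsQuadraticExtension.finrank_eq_two R S)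
  simp only [Algebra.norm_eq_matrix_det basis, Algebra.trace_eq_matrix_trace basis, map_add,
    AlgHom.commutes, Matrix.det_fin_two, Matrix.trace_fin_two, Matrix.add_apply,
    Matrix.algebraMap_matrix_apply, Algebra.algebraMap_self_apply, if_true, zero_ne_one,
    one_ne_zero, if_false]
  ring

theorem mul_self_sub_trace_mul_add_norm_eq_zero (x : S) :
    x * x - algebraMap R S (Algebra.trace R S x) * x + algebraMap R S (Algebra.norm R x) = 0 := by
  let basis := Module.finBasisOfFinrankEq R S (Algebra.IsQuadraticExtension.finrank_eq_two R S)
  apply Algebra.leftMulMatrix_injective basis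
  have cayley_hamilton := Matrix.aeval_self_charpoly (Algebra.leftMulMatrix basis x)
  rw [Matrix.charpoly_fin_two, ← Algebra.norm_eq_matrix_det, ← Algebra.trace_eq_matrix_trace]
    at cayley_hamilton
  simpa [sq] using cayley_hamilton

theorem two_mul_sub_trace_sq (x : S) :
    (2 * x - algebraMap R S (Algebra.trace R S x)) ^ 2 =
      algebraMap R S (Algebra.trace R S x ^ 2 - 4 * Algebra.norm R x) := by
  simp only [map_sub, map_mul, map_pow, map_ofNat]
  linear_combination 4 * mul_self_sub_trace_mul_add_norm_eq_zero (R := R) x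

end QuadraticAlgebra

theorem neZero_two_of_algebra (K F : Type*) [Field K] [NeZero (2 : K)] [Semiring F] [Nontrivial F]
    [Algebra K F] : NeZero (2 : F) :=
  ⟨map_ofNat (algebraMap K F) 2 ▸ (map_ne_zero (algebraMap K F)).mpr two_ne_zero⟩

section TraceNormCount

variable {K F : Type*} [Field K] [Field F] [Algebra K F] [Algebra.IsQuadraticExtension K F]
  {t m : K}

theorem trace_eq_and_norm_eq_iff_of_notMem_range {x : F} (hx : x ∉ Set.range (algebraMap K F)) :
    (Algebra.trace K F x = t ∧ Algebra.norm K x = m) ↔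
      x * x - algebraMap K F t * x + algebraMap K F m = 0 := by
  have hroot := mul_self_sub_trace_mul_add_norm_eq_zero (R := K) x
  constructor
  · rintro ⟨rfl, rfl⟩
    exact hroot
  · intro hx'
    have hlin : algebraMap K F (Algebra.trace K F x - t) * x =
        algebraMap K F (Algebra.norm K x - m) := by
      simp only [map_sub]
      linear_combination hx' - hroot
    have htrace : Algebra.trace K F x = t := by
      by_contra hne
      refine hx ⟨(Algebra.norm K x - m) / (Algebra.trace K F x - t), ?_⟩
      rw [map_div₀, div_eq_iff (by simpa [sub_eq_zero] using hne), ← hlin, mul_comm]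
    refine ⟨htrace, ?_⟩
    rw [htrace, sub_self, map_zero, zero_mul, eq_comm, map_eq_zero] at hlin
    exact sub_eq_zero.mp hlin

theorem trace_sq_sub_four_mul_norm_algebraMap (c : K) :
    Algebra.trace K F (algebraMap K F c) ^ 2 - 4 * Algebra.norm K (algebraMap K F c) = 0 := by
  rw [Algebra.trace_algebraMap, Algebra.norm_algebraMap,
    Algebra.IsQuadraticExtension.finrank_eq_two, nsmul_eq_mul]
  push_cast
  ring

theorem trace_eq_and_norm_eq_iff_of_not_isSquare (hK : ¬ IsSquare (t ^ 2 - 4 * m)) (x : F) :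
    (Algebra.trace K F x = t ∧ Algebra.norm K x = m) ↔
      x * x - algebraMap K F t * x + algebraMap K F m = 0 := by
  by_cases hx : x ∈ Set.range (algebraMap K F)
  · obtain ⟨c, rfl⟩ := hx
    refine iff_of_false ?_ fun hc => hK ⟨2 * c - t, ?_⟩
    · rintro ⟨rfl, rfl⟩
      exact hK (trace_sq_sub_four_mul_norm_algebraMap (F := F) c ▸ IsSquare.zero)
    · have hc' : c * c - t * c + m = 0 := (algebraMap K F).injective (by simpa using hc)
      linear_combination -4 * hc'
  · exact trace_eq_and_norm_eq_iff_of_notMem_range hx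

variable [NeZero (2 : K)]

theorem ncard_trace_norm_of_discrim_eq_zero (hΔ : t ^ 2 - 4 * m = 0) :
    {x : F | Algebra.trace K F x = t ∧ Algebra.norm K x = m}.ncard = 1 := by
  have := neZero_two_of_algebra K F
  rw [Set.ncard_eq_one]
  refine ⟨algebraMap K F (t / 2), Set.eq_singleton_iff_unique_mem.mpr ⟨⟨?_, ?_⟩, ?_⟩⟩
  · rw [Algebra.trace_algebraMap, Algebra.IsQuadraticExtension.finrank_eq_two, nsmul_eq_mul]
    exact mul_div_cancel₀ t two_ne_zero
  · rw [Algebra.norm_algebraMap, Algebra.IsQuadraticExtension.finrank_eq_two]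
    field_simp
    linear_combination hΔ
  · rintro x ⟨rfl, rfl⟩
    have hdouble : 2 * x - algebraMap K F (Algebra.trace K F x) = 0 := by
      rw [← sq_eq_zero_iff, two_mul_sub_trace_sq, hΔ, map_zero]
    rw [map_div₀, map_ofNat, eq_div_iff two_ne_zero]
    linear_combination hdouble

theorem mem_range_algebraMap_of_isSquare {x : F}
    (hsq : IsSquare (Algebra.trace K F x ^ 2 - 4 * Algebra.norm K x)) :
    x ∈ Set.range (algebraMap K F) := by
  have := neZero_two_of_algebra K F
  obtain ⟨s, hs⟩ := hsq
  have hx := two_mul_sub_trace_sq (R := K) x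
  rw [hs, ← sq, map_pow] at hx
  obtain ⟨s', hs'⟩ :
      ∃ s' : K, 2 * x - algebraMap K F (Algebra.trace K F x) = algebraMap K F s' := by
    rcases sq_eq_sq_iff_eq_or_eq_neg.mp hx with h | h
    exacts [⟨s, h⟩, ⟨-s, by rw [h, map_neg]⟩]
  refine ⟨(Algebra.trace K F x + s') / 2, ?_⟩
  rw [map_div₀, map_ofNat, map_add, div_eq_iff two_ne_zero]
  linear_combination -hs'

theorem ncard_trace_norm_of_isSquare (hΔ : t ^ 2 - 4 * m ≠ 0) (hsq : IsSquare (t ^ 2 - 4 * m)) :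
    {x : F | Algebra.trace K F x = t ∧ Algebra.norm K x = m}.ncard = 0 := by
  suffices hempty : {x : F | Algebra.trace K F x = t ∧ Algebra.norm K x = m} = ∅ by
    rw [hempty, Set.ncard_empty]
  refine Set.eq_empty_of_forall_notMem ?_
  rintro x ⟨rfl, rfl⟩
  obtain ⟨c, rfl⟩ := mem_range_algebraMap_of_isSquare hsq
  exact hΔ (trace_sq_sub_four_mul_norm_algebraMap c)

theorem ncard_trace_norm_of_not_isSquare (hK : ¬ IsSquare (t ^ 2 - 4 * m))
    (hF : IsSquare (algebraMap K F (t ^ 2 - 4 * m))) :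
    {x : F | Algebra.trace K F x = t ∧ Algebra.norm K x = m}.ncard = 2 := by
  have := neZero_two_of_algebra K F
  obtain ⟨s, hs⟩ := hF
  have s_ne_zero : s ≠ 0 := by
    rintro rfl
    rw [mul_zero, map_eq_zero] at hs
    exact hK (hs ▸ IsSquare.zero)
  have hdiscrim : discrim 1 (-algebraMap K F t) (algebraMap K F m) = s * s := by
    rw [← hs, discrim]
    simp only [map_sub, map_pow, map_mul, map_ofNat]
    ring
  rw [Set.ncard_eq_two]
  refine ⟨(algebraMap K F t + s) / 2, (algebraMap K F t - s) / 2, fun heq => s_ne_zero ?_, ?_⟩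
  · rw [div_left_inj' two_ne_zero] at heq
    exact (mul_eq_zero_iff_left two_ne_zero).mp (by linear_combination heq)
  · ext x
    have quadratic_formula := quadratic_eq_zero_iff one_ne_zero hdiscrim x
    rw [one_mul, neg_mul, ← sub_eq_add_neg, neg_neg, mul_one] at quadratic_formula
    exact (trace_eq_and_norm_eq_iff_of_not_isSquare hK x).trans quadratic_formula

end TraceNormCount

section FiniteField

variable {K F : Type*} [Field K] [Field F] [Finite F] [Algebra K F]

-- In odd characteristic `c` is a norm, and the norm is the power map with the even exponent
-- `∑ i < [F : K], |K| ^ i`.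
theorem isSquare_algebraMap_of_even_finrank (heven : Even (Module.finrank K F)) (c : K) :
    IsSquare (algebraMap K F c) := by
  have : Finite K := Finite.of_injective _ (algebraMap K F).injective
  have : Fintype K := Fintype.ofFinite K
  by_cases hchar : ringChar K = 2
  · exact (FiniteField.isSquare_of_char_two hchar c).map (algebraMap K F)
  · obtain ⟨x, rfl⟩ := FiniteField.norm_surjective K F c
    have card_odd : Odd (Nat.card K) := by
      rw [Nat.card_eq_fintype_card, Nat.odd_iff]
      exact FiniteField.odd_card_of_char_ne_two hchar
    rw [FiniteField.algebraMap_norm_eq_pow_sum]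
    refine Even.isSquare_pow ?_ x
    rw [Finset.even_sum_iff_even_card_odd, Finset.filter_true_of_mem fun i _ => card_odd.pow,
      Finset.card_range]
    exact heven

theorem ringChar_ne_two_of_odd_card {k : Type*} [Field k] [Finite k] (hk : Odd (Nat.card k)) :
    ringChar k ≠ 2 := by
  have : Fintype k := Fintype.ofFinite k
  rw [Nat.card_eq_fintype_card, Nat.odd_iff] at hk
  rw [Ne, FiniteField.even_card_iff_char_two, hk]
  exact one_ne_zero

theorem isQuadraticExtension_of_card_eq_sq (hF : Nat.card F = Nat.card K ^ 2) :
    Algebra.IsQuadraticExtension K F := by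
  have : Finite K := Finite.of_injective _ (algebraMap K F).injective
  rw [Module.natCard_eq_pow_finrank (K := K)] at hF
  exact ⟨Nat.pow_right_injective Finite.one_lt_card hF⟩

variable [Algebra.IsQuadraticExtension K F]

theorem algebraMap_norm_eq_pow_card_add_one (x : F) :
    algebraMap K F (Algebra.norm K x) = x ^ (Nat.card K + 1) := by
  rw [FiniteField.algebraMap_norm_eq_pow_sum, Algebra.IsQuadraticExtension.finrank_eq_two,
    Finset.sum_range_succ, Finset.sum_range_one, pow_zero, pow_one, add_comm]

theorem cycNum_eq_ncard_trace_norm {ω : Fˣ} (hω : ∀ x : Fˣ, x ∈ Subgroup.zpowers ω) (a b : ℕ) :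
    cycNum ω (Nat.card K - 1) a b =
      {x : F | Algebra.trace K F x =
          Algebra.norm K (ω : F) ^ b - Algebra.norm K (ω : F) ^ a - 1 ∧
        Algebra.norm K x = Algebra.norm K (ω : F) ^ a}.ncard := by
  rw [cycNum_eq_ncard_norm_eq (K := K) hω]
  congr 1
  ext x
  have norm_add_one : Algebra.norm K (x + 1) = Algebra.norm K x + Algebra.trace K F x + 1 := by
    simpa using norm_add_algebraMap_of_isQuadraticExtension x (1 : K)
  rw [Set.mem_ofPred_eq, Set.mem_ofPred_eq, norm_add_one, and_comm, and_congr_left_iff]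
  intro hx
  rw [hx]
  constructor <;> intro h <;> linear_combination h

theorem cycNum_r_two_odd_char_general (hK : ringChar K ≠ 2)
    (ω : Fˣ) (hω : ∀ x : Fˣ, x ∈ Subgroup.zpowers ω)
    (ζ : K) (hζ : algebraMap K F ζ = (ω : F) ^ (Nat.card K + 1)) (a b : ℕ) :
    ((1 + ζ ^ a - ζ ^ b) ^ 2 - 4 * ζ ^ a = 0 → cycNum ω (Nat.card K - 1) a b = 1) ∧
    ((1 + ζ ^ a - ζ ^ b) ^ 2 - 4 * ζ ^ a ≠ 0 →
      IsSquare ((1 + ζ ^ a - ζ ^ b) ^ 2 - 4 * ζ ^ a) → cycNum ω (Nat.card K - 1) a b = 0) ∧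
    (¬ IsSquare ((1 + ζ ^ a - ζ ^ b) ^ 2 - 4 * ζ ^ a) → cycNum ω (Nat.card K - 1) a b = 2) := by
  have : NeZero (2 : K) := ⟨Ring.two_ne_zero hK⟩
  have even_finrank : Even (Module.finrank K F) := by
    rw [Algebra.IsQuadraticExtension.finrank_eq_two]
    exact even_two
  obtain rfl : ζ = Algebra.norm K (ω : F) :=
    (algebraMap K F).injective (hζ.trans (algebraMap_norm_eq_pow_card_add_one (ω : F)).symm)
  rw [cycNum_eq_ncard_trace_norm hω,
    show 1 + Algebra.norm K (ω : F) ^ a - Algebra.norm K (ω : F) ^ b =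
      -(Algebra.norm K (ω : F) ^ b - Algebra.norm K (ω : F) ^ a - 1) by ring, neg_sq]
  exact ⟨ncard_trace_norm_of_discrim_eq_zero, ncard_trace_norm_of_isSquare, fun hΔ =>
    ncard_trace_norm_of_not_isSquare hΔ (isSquare_algebraMap_of_even_finrank even_finrank _)⟩

end FiniteField

/-- For `q` a power of an odd prime, `r = 2`, `k = q + 1`, and
`Δ(a,b) = (1 + ω^{ak} - ω^{bk})^2 - 4 ω^{ak} ∈ 𝔽_q`, the cyclotomic number `(a,b)_{q-1}`
over `𝔽_{q^2}` is `1`, `0`, or `2` according as `Δ(a,b)` is zero, a nonzero square,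
or a nonsquare. -/
theorem cycNum_r_two_odd_char {p n q : ℕ} (hp : p.Prime) (hodd : Odd p) (hn : 1 ≤ n)
    (hq : q = p ^ n)
    {K F : Type*} [Field K] [Field F] [Fintype K] [Fintype F] [Algebra K F]
    (hK : Fintype.card K = q) (hF : Fintype.card F = q ^ 2)
    (ω : Fˣ) (hω : ∀ x : Fˣ, x ∈ Subgroup.zpowers ω)
    (ζ : K) (hζ : algebraMap K F ζ = (ω : F) ^ (q + 1))
    (a b : ℕ) (ha : a ≤ q - 2) (hb : b ≤ q - 2) :
    ((1 + ζ ^ a - ζ ^ b) ^ 2 - 4 * ζ ^ a = 0 → cycNum ω (q - 1) a b = 1) ∧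
    ((1 + ζ ^ a - ζ ^ b) ^ 2 - 4 * ζ ^ a ≠ 0 →
      IsSquare ((1 + ζ ^ a - ζ ^ b) ^ 2 - 4 * ζ ^ a) → cycNum ω (q - 1) a b = 0) ∧
    (¬ IsSquare ((1 + ζ ^ a - ζ ^ b) ^ 2 - 4 * ζ ^ a) → cycNum ω (q - 1) a b = 2) := by
  rw [← Nat.card_eq_fintype_card] at hK hF
  subst hK
  have : Algebra.IsQuadraticExtension K F := isQuadraticExtension_of_card_eq_sq hF
  have char_ne_two : ringChar K ≠ 2 := ringChar_ne_two_of_odd_card (hq ▸ hodd.pow)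
  exact cycNum_r_two_odd_char_general char_ne_two ω hω ζ hζ a b
end
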